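/- Let d ≥ 1 and α ∈ (0,1). Let A = {y ∈ ℝ^d : |y| < 1/4 and y_d > 0} and let e_d = (0,…,0,1) ∈ ℝ^d. Then liminf_{h→0⁺} (1/h) ∫_A (|y|^{α−d} − |y + h e_d|^{α−d}) y_d^{1−α} dy = +∞. (In particular, the difference quotients of the function x ↦ ∫_A |x−y|^{α−d} y_d^{1−α} dy at 0 in the direction −e_d diverge, so this Riesz-type potential of ((y_d)_+)^{2−α} is not twice differentiable at 0.) -/

import Mathlib

open MeasureTheory Set Filter Topology

/-!
As `h → 0⁺`, the difference quotients of the nonnegative integrand converge pointwise to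
`(d - α) |y|^{α - d - 2} y_d^{2 - α}`, which is homogeneous of degree exactly `-d`. A positive
function of this degree is not integrable on a half ball: the integrals over `A` and `A/2` are
equal, so a finite value would force the integral over `A \ A/2` to vanish. Fatou's lemma transfers
the divergence from the limit to the difference quotients.
-/

open Module ENNReal
open scoped Pointwise RealInnerProductSpace

section HaarScaling

variable {E : Type*} [NormedAddCommGroup E] [NormedSpace ℝ E] [FiniteDimensional ℝ E]
  [MeasurableSpace E] [BorelSpace E] (μ : Measure E) [μ.IsAddHaarMeasure] {s : Set E} {c : ℝ}

lemma setLIntegral_smul_set (hc : c ≠ 0) (hs : MeasurableSet s) (g : E → ℝ≥0∞) :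
    ∫⁻ y in c • s, g y ∂μ = ENNReal.ofReal |c ^ finrank ℝ E| * ∫⁻ y in s, g (c • y) ∂μ := by
  have hderiv (y : E) (_ : y ∈ s) :
      HasFDerivWithinAt (c • ·) (c • ContinuousLinearMap.id ℝ E) s y :=
    (hasFDerivWithinAt_id y s).const_smul c
  have hdet : (c • ContinuousLinearMap.id ℝ E).det = c ^ finrank ℝ E := by
    simp [ContinuousLinearMap.det]
  rw [← image_smul, lintegral_image_eq_lintegral_abs_det_fderiv_mul μ hs hderiv
    (smul_right_injective E hc).injOn, hdet, lintegral_const_mul' _ _ ofReal_ne_top]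

lemma addHaar_smul_lt [Nontrivial E] (hc : |c| < 1) (hs₀ : μ s ≠ 0) (hs : μ s ≠ ∞) :
    μ (c • s) < μ s := by
  have hcoeff : ENNReal.ofReal |c ^ finrank ℝ E| < 1 := by
    rw [ofReal_lt_one, abs_pow]
    exact pow_lt_one₀ (abs_nonneg c) hc finrank_pos.ne'
  calc μ (c • s) = ENNReal.ofReal |c ^ finrank ℝ E| * μ s := Measure.addHaar_smul μ c s
    _ < 1 * μ s := ENNReal.mul_lt_mul_left hs₀ hs hcoeff
    _ = μ s := one_mul _

lemma setLIntegral_eq_top_of_le_comp_smul [Nontrivial E] (hc₀ : c ≠ 0) (hc : |c| < 1)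
    (hs : MeasurableSet s) (hμ₀ : μ s ≠ 0) (hμ : μ s ≠ ∞) (hcs : c • s ⊆ s) {g : E → ℝ≥0∞}
    (hg : Measurable g) (hg₀ : ∀ y ∈ s, g y ≠ 0)
    (hscale : ∀ y ∈ s, g y ≤ ENNReal.ofReal |c ^ finrank ℝ E| * g (c • y)) :
    ∫⁻ y in s, g y ∂μ = ∞ := by
  by_contra hfin
  have hcs_meas : MeasurableSet (c • s) := hs.const_smul₀ c
  have hle : ∫⁻ y in s, g y ∂μ ≤ ∫⁻ y in c • s, g y ∂μ := by
    rw [setLIntegral_smul_set μ hc₀ hs, ← lintegral_const_mul' _ _ ofReal_ne_top]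
    exact setLIntegral_mono' hs hscale
  have hzero : ∫⁻ y in s \ c • s, g y ∂μ = 0 := by
    have hsplit := lintegral_inter_add_sdiff (μ := μ) g s hcs_meas
    rw [inter_eq_self_of_subset_right hcs] at hsplit
    have hfin' : ∫⁻ y in c • s, g y ∂μ ≠ ∞ := ne_top_of_le_ne_top hfin (lintegral_mono_set hcs)
    rw [← hsplit] at hle
    simpa using (ENNReal.add_le_add_iff_left hfin').1 (hle.trans (add_zero _).ge)
  have hnull : μ (s \ c • s) = 0 := by
    rw [measure_eq_zero_iff_ae_notMem]
    exact ((setLIntegral_eq_zero_iff (hs.diff hcs_meas) hg).1 hzero).mono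
      fun y hy hys ↦ hg₀ y hys.1 (hy hys)
  exact (addHaar_smul_lt μ hc hμ₀ hμ).not_ge <| measure_mono_ae <| ae_le_set.2 hnull

end HaarScaling

lemma tendsto_integral_atTop_of_lintegral_eq_top {X ι : Type*} [MeasurableSpace X] {μ : Measure X}
    {l : Filter ι} [l.IsCountablyGenerated] {F : ι → X → ℝ} {f : X → ℝ}
    (hmeas : ∀ i, AEMeasurable (F i) μ) (hint : ∀ᶠ i in l, Integrable (F i) μ)
    (hnonneg : ∀ᶠ i in l, 0 ≤ᵐ[μ] F i)
    (hlim : ∀ᵐ x ∂μ, Tendsto (fun i ↦ F i x) l (𝓝 (f x)))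
    (htop : ∫⁻ x, ENNReal.ofReal (f x) ∂μ = ∞) :
    Tendsto (fun i ↦ ∫ x, F i x ∂μ) l atTop := by
  rcases l.eq_or_neBot with rfl | _
  · exact tendsto_bot
  have hofReal : (fun i ↦ ∫⁻ x, ENNReal.ofReal (F i x) ∂μ) =ᶠ[l]
      fun i ↦ ENNReal.ofReal (∫ x, F i x ∂μ) := by
    filter_upwards [hint, hnonneg] with i hi hi₀
    exact (ofReal_integral_eq_lintegral_ofReal hi hi₀).symm
  have hliminf : ∞ ≤ liminf (fun i ↦ ∫⁻ x, ENNReal.ofReal (F i x) ∂μ) l := calc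
    ∞ = ∫⁻ x, liminf (fun i ↦ ENNReal.ofReal (F i x)) l ∂μ := by
      rw [← htop]
      exact lintegral_congr_ae (hlim.mono fun x hx ↦ (tendsto_ofReal hx).liminf_eq.symm)
    _ ≤ _ := lintegral_liminf_le' fun i ↦ (hmeas i).ennreal_ofReal
  rw [← tendsto_ofReal_nhds_top]
  exact (tendsto_of_le_liminf_of_limsup_le hliminf le_top).congr' hofReal

section HalfBall

variable {E : Type*} [NormedAddCommGroup E] [InnerProductSpace ℝ E] {e y : E} {r : ℝ}

/-- The open half ball of radius `r` about the origin on the side of the hyperplane `eᗮ` into which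
`e` points. The vector `e` need not be normalized. -/
def halfBall (e : E) (r : ℝ) : Set E := {y | ‖y‖ < r ∧ 0 < ⟪e, y⟫}

lemma ne_zero_of_inner_pos (hy : 0 < ⟪e, y⟫) : y ≠ 0 := by
  rintro rfl
  simp at hy

lemma isOpen_halfBall (e : E) (r : ℝ) : IsOpen (halfBall e r) :=
  IsOpen.and (isOpen_lt continuous_norm continuous_const)
    (isOpen_lt continuous_const (continuous_const.inner continuous_id))

lemma halfBall_nonempty (he : e ≠ 0) (hr : 0 < r) : (halfBall e r).Nonempty := by
  have he' : 0 < ‖e‖ := norm_pos_iff.2 he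
  refine ⟨(r / 2 / ‖e‖) • e, ?_, ?_⟩
  · rw [norm_smul, Real.norm_of_nonneg (by positivity), div_mul_cancel₀ _ he'.ne']
    exact half_lt_self hr
  · rw [inner_smul_right, real_inner_self_eq_norm_sq]
    positivity

lemma halfBall_subset_ball (e : E) (r : ℝ) : halfBall e r ⊆ Metric.ball 0 r :=
  fun _ hy ↦ mem_ball_zero_iff.2 hy.1

lemma smul_halfBall_subset (e : E) (r : ℝ) {c : ℝ} (hc₀ : 0 < c) (hc : c ≤ 1) :
    c • halfBall e r ⊆ halfBall e r := by
  rintro _ ⟨y, ⟨hyr, hye⟩, rfl⟩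
  constructor
  · rw [norm_smul, Real.norm_of_nonneg hc₀.le]
    exact (mul_le_of_le_one_left (norm_nonneg y) hc).trans_lt hyr
  · rw [inner_smul_right]
    positivity

end HalfBall

section NormPower

variable {E : Type*} [NormedAddCommGroup E] [InnerProductSpace ℝ E] {e y : E} {h p q : ℝ}

lemma norm_le_norm_add_smul (hh : 0 ≤ h) (hy : 0 ≤ ⟪e, y⟫) : ‖y‖ ≤ ‖y + h • e‖ := by
  refine le_of_sq_le_sq ?_ (norm_nonneg _)
  rw [norm_add_sq_real, inner_smul_right, real_inner_comm]
  nlinarith [mul_nonneg hh hy, sq_nonneg ‖h • e‖]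

lemma hasDerivAt_norm_add_smul_rpow (hy : y ≠ 0) (e : E) (p : ℝ) :
    HasDerivAt (fun t : ℝ ↦ ‖y + t • e‖ ^ p) (p * ‖y‖ ^ (p - 2) * ⟪e, y⟫) 0 := by
  have hrpow (x : E) (a : ℝ) : (‖x‖ ^ 2) ^ a = ‖x‖ ^ (2 * a) := by
    rw [← Real.rpow_natCast_mul (norm_nonneg x), Nat.cast_ofNat]
  have hline : HasDerivAt (fun t : ℝ ↦ y + t • e) e 0 := by
    simpa using ((hasDerivAt_id (0 : ℝ)).smul_const e).const_add y
  have hpow := hline.norm_sq.rpow_const (p := p / 2) (Or.inl (by simpa using hy))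
  simp only [hrpow, zero_smul, add_zero, mul_div_cancel₀ p two_ne_zero] at hpow
  convert hpow using 1
  rw [real_inner_comm, show 2 * (p / 2 - 1) = p - 2 by ring]
  ring

/-- The decrease of `‖·‖ ^ p` from `y` to `y + h • e`, weighted by the power `q` of `⟪e, y⟫`. The
Riesz-type potential has `p = α - d` and `q = 1 - α`. -/
noncomputable def weightedDecrement (e : E) (p q h : ℝ) (y : E) : ℝ :=
  (‖y‖ ^ p - ‖y + h • e‖ ^ p) * ⟪e, y⟫ ^ q

/-- The limit of `weightedDecrement e p q h y / h` as `h → 0⁺`, for `y` in the open half space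
`0 < ⟪e, y⟫`. -/
noncomputable def weightedDecrementDeriv (e : E) (p q : ℝ) (y : E) : ℝ :=
  -p * ‖y‖ ^ (p - 2) * ⟪e, y⟫ ^ (q + 1)

lemma tendsto_weightedDecrement_div (hy : 0 < ⟪e, y⟫) (p q : ℝ) :
    Tendsto (fun h ↦ 1 / h * weightedDecrement e p q h y) (𝓝[>] 0)
      (𝓝 (weightedDecrementDeriv e p q y)) := by
  have hderiv := hasDerivAt_norm_add_smul_rpow (ne_zero_of_inner_pos hy) e p
  have hslope := hderiv.tendsto_slope_zero_right
  convert! hslope.neg.mul_const (⟪e, y⟫ ^ q) using 2 with h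
  · simp only [weightedDecrement, zero_add, zero_smul, add_zero, smul_eq_mul]
    ring
  · rw [weightedDecrementDeriv, Real.rpow_add_one hy.ne']
    ring

lemma weightedDecrement_nonneg (hp : p ≤ 0) (hh : 0 ≤ h) (hy : 0 < ⟪e, y⟫) :
    0 ≤ weightedDecrement e p q h y :=
  mul_nonneg (sub_nonneg.2 <| Real.rpow_le_rpow_of_nonpos
    (norm_pos_iff.2 (ne_zero_of_inner_pos hy)) (norm_le_norm_add_smul hh hy.le) hp)
    (Real.rpow_nonneg hy.le q)

lemma weightedDecrement_le (hq : 0 ≤ q) (hy : 0 < ⟪e, y⟫) :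
    weightedDecrement e p q h y ≤ ‖e‖ ^ q * ‖y‖ ^ (p + q) := calc
  weightedDecrement e p q h y ≤ ‖y‖ ^ p * ⟪e, y⟫ ^ q :=
    mul_le_mul_of_nonneg_right (sub_le_self _ (by positivity)) (by positivity)
  _ ≤ ‖y‖ ^ p * (‖e‖ * ‖y‖) ^ q := by gcongr; exact real_inner_le_norm e y
  _ = ‖e‖ ^ q * ‖y‖ ^ (p + q) := by
    rw [Real.mul_rpow (norm_nonneg e) (norm_nonneg y),
      Real.rpow_add (norm_pos_iff.2 (ne_zero_of_inner_pos hy))]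
    ring

lemma weightedDecrementDeriv_pos (hp : p < 0) (hy : 0 < ⟪e, y⟫) :
    0 < weightedDecrementDeriv e p q y :=
  mul_pos (mul_pos (neg_pos.2 hp)
    (Real.rpow_pos_of_pos (norm_pos_iff.2 (ne_zero_of_inner_pos hy)) _))
    (Real.rpow_pos_of_pos hy _)

lemma weightedDecrementDeriv_smul {c : ℝ} (hc : 0 < c) (hy : 0 < ⟪e, y⟫) :
    weightedDecrementDeriv e p q (c • y) = c ^ (p + q - 1) * weightedDecrementDeriv e p q y := by
  have hexp : c ^ (p + q - 1) = c ^ (p - 2) * c ^ (q + 1) := by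
    rw [← Real.rpow_add hc]
    ring_nf
  rw [weightedDecrementDeriv, weightedDecrementDeriv, norm_smul, Real.norm_of_nonneg hc.le,
    inner_smul_right, Real.mul_rpow hc.le (norm_nonneg y), Real.mul_rpow hc.le hy.le, hexp]
  ring

lemma measurable_weightedDecrement [MeasurableSpace E] [BorelSpace E] (e : E) (p q h : ℝ) :
    Measurable (weightedDecrement e p q h) := by
  unfold weightedDecrement
  fun_prop

end NormPower

section Divergence

variable {E : Type*} [NormedAddCommGroup E] [InnerProductSpace ℝ E] [FiniteDimensional ℝ E]
  [MeasurableSpace E] [BorelSpace E] (μ : Measure E) [μ.IsAddHaarMeasure] {e : E} {p q r : ℝ}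

lemma integrableOn_weightedDecrement [Nontrivial E] (hp : p ≤ 0) (hq : 0 ≤ q)
    (hpq : -(finrank ℝ E : ℝ) < p + q) {h : ℝ} (hh : 0 ≤ h) :
    IntegrableOn (weightedDecrement e p q h) (halfBall e r) μ := by
  have hball : IntegrableOn (fun y : E ↦ ‖e‖ ^ q * ‖y‖ ^ (p + q)) (Metric.ball 0 r) μ := by
    refine integrableOn_ball_of_norm_le_rpow (C := ‖e‖ ^ q) (α := -(p + q)) finrank_pos
      (by linarith) (ae_of_all _ fun y ↦ ?_)
      ((measurable_norm.pow_const _).const_mul _).aestronglyMeasurable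
    rw [neg_neg, Real.norm_of_nonneg (by positivity)]
  refine (hball.mono_set (halfBall_subset_ball e r)).mono'
    (measurable_weightedDecrement e p q h).aestronglyMeasurable ?_
  refine ae_restrict_of_forall_mem (isOpen_halfBall e r).measurableSet fun y hy ↦ ?_
  rw [Real.norm_of_nonneg (weightedDecrement_nonneg hp hh hy.2)]
  exact weightedDecrement_le hq hy.2

lemma setLIntegral_weightedDecrementDeriv_eq_top (he : e ≠ 0) (hr : 0 < r) (hp : p < 0)
    (hpq : p + q ≤ 1 - finrank ℝ E) :
    ∫⁻ y in halfBall e r, ENNReal.ofReal (weightedDecrementDeriv e p q y) ∂μ = ∞ := by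
  have : Nontrivial E := nontrivial_of_ne e 0 he
  have hmeas : Measurable (weightedDecrementDeriv e p q) := by
    unfold weightedDecrementDeriv
    fun_prop
  have hcoeff : (1 : ℝ) ≤ |(1 / 2) ^ finrank ℝ E| * (1 / 2) ^ (p + q - 1) := by
    rw [abs_of_pos (by positivity), ← Real.rpow_natCast, ← Real.rpow_add (by norm_num)]
    exact Real.one_le_rpow_of_pos_of_le_one_of_nonpos (by norm_num) (by norm_num) (by linarith)
  refine setLIntegral_eq_top_of_le_comp_smul μ (c := 1 / 2) (by norm_num) (by norm_num)
    (isOpen_halfBall e r).measurableSet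
    ((isOpen_halfBall e r).measure_pos μ (halfBall_nonempty he hr)).ne'
    (measure_ne_top_of_subset (halfBall_subset_ball e r) measure_ball_lt_top.ne)
    (smul_halfBall_subset e r (by norm_num) (by norm_num)) hmeas.ennreal_ofReal
    (fun y hy ↦ (ofReal_pos.2 (weightedDecrementDeriv_pos hp hy.2)).ne') fun y hy ↦ ?_
  rw [← ofReal_mul (abs_nonneg _), weightedDecrementDeriv_smul (by norm_num) hy.2, ← mul_assoc]
  exact ofReal_le_ofReal (le_mul_of_one_le_left (weightedDecrementDeriv_pos hp hy.2).le hcoeff)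

theorem stmt_6_general (he : e ≠ 0) (hr : 0 < r) (hp : p < 0) (hq : 0 ≤ q)
    (hpq_gt : -(finrank ℝ E : ℝ) < p + q) (hpq_le : p + q ≤ 1 - finrank ℝ E) :
    Tendsto (fun h : ℝ ↦ 1 / h * ∫ y in {y : E | ‖y‖ < r ∧ 0 < ⟪e, y⟫},
      (‖y‖ ^ p - ‖y + h • e‖ ^ p) * ⟪e, y⟫ ^ q ∂μ) (𝓝[>] 0) atTop := by
  have : Nontrivial E := nontrivial_of_ne e 0 he
  have hA : MeasurableSet (halfBall e r) := (isOpen_halfBall e r).measurableSet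
  simp only [← integral_const_mul]
  refine tendsto_integral_atTop_of_lintegral_eq_top
    (F := fun h y ↦ 1 / h * weightedDecrement e p q h y) (f := weightedDecrementDeriv e p q)
    (fun h ↦ ((measurable_weightedDecrement e p q h).const_mul _).aemeasurable) ?_ ?_
    (ae_restrict_of_forall_mem hA fun y hy ↦ tendsto_weightedDecrement_div hy.2 p q)
    (setLIntegral_weightedDecrementDeriv_eq_top μ he hr hp hpq_le)
  · filter_upwards [self_mem_nhdsWithin] with h hh
    exact (integrableOn_weightedDecrement μ hp.le hq hpq_gt (le_of_lt hh)).const_mul _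
  · filter_upwards [self_mem_nhdsWithin] with h hh
    exact ae_restrict_of_forall_mem hA fun y hy ↦ mul_nonneg (one_div_nonneg.2 (le_of_lt hh))
      (weightedDecrement_nonneg hp.le (le_of_lt hh) hy.2)

end Divergence

/-- For `d ≥ 1`, `α ∈ (0,1)`, `A = {y : |y| < 1/4, y_d > 0}` and
`e_d` the last basis vector, the difference quotients
`(1/h) ∫_A (|y|^{α−d} − |y + h e_d|^{α−d}) y_d^{1−α} dy` diverge to `+∞` as `h → 0⁺`
(i.e. the liminf is `+∞`). -/
theorem stmt_6 (d : ℕ) (hd : 1 ≤ d) (α : ℝ) (hα : α ∈ Ioo (0:ℝ) 1) :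
    Tendsto (fun h : ℝ =>
        (1 / h) * ∫ y in {y : EuclideanSpace ℝ (Fin d) | ‖y‖ < 1/4 ∧ 0 < y ⟨d - 1, by omega⟩},
          (‖y‖ ^ (α - (d:ℝ))
            - ‖y + h • EuclideanSpace.single (⟨d - 1, by omega⟩ : Fin d) (1:ℝ)‖ ^ (α - (d:ℝ)))
            * (y ⟨d - 1, by omega⟩) ^ (1 - α))
      (𝓝[>] 0) atTop := by
  have hd' : (1 : ℝ) ≤ d := mod_cast hd
  simpa [EuclideanSpace.inner_single_left] using stmt_6_general volume
    (e := EuclideanSpace.single (⟨d - 1, by omega⟩ : Fin d) (1 : ℝ)) (r := 1 / 4)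
    (p := α - d) (q := 1 - α) (by simp) (by norm_num) (by linarith [hα.2]) (by linarith [hα.2])
    (by simp) (by simp)
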